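/- arXiv:1709.00524 — 8 statements merged into one kernel-verified Lean document; each statement's English description precedes it below -/
import Mathlib

section
/- Let x be a real number and let α, ω₁, ω₂ be pairwise distinct complex numbers satisfying α+ω₁+ω₂ = x², αω₁+αω₂+ω₁ω₂ = -x, and αω₁ω₂ = 1 (i.e., the roots of λ³ - x²λ² - xλ - 1 = 0). Then for every natural number n, the Tribonacci polynomial satisfies the Binet formula T_n(x) = α^{n+1}/((α-ω₁)(α-ω₂)) - ω₁^{n+1}/((α-ω₁)(ω₁-ω₂)) + ω₂^{n+1}/((α-ω₂)(ω₁-ω₂)), where T_n(x) is regarded as a complex number. -/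
/-- Tribonacci polynomials: T₀=0, T₁=1, T₂=x², Tₙ₊₃ = x²Tₙ₊₂ + xTₙ₊₁ + Tₙ. -/
def Trib (x : ℝ) : ℕ → ℝ
  | 0 => 0
  | 1 => 1
  | 2 => x ^ 2
  | n + 3 => x ^ 2 * Trib x (n + 2) + x * Trib x (n + 1) + Trib x n

/-- Tribonacci quaternion polynomials Q_{T,n}(x). -/
noncomputable def QT (x : ℝ) (n : ℕ) : Quaternion ℝ :=
  ⟨Trib x n, Trib x (n + 1), Trib x (n + 2), Trib x (n + 3)⟩

/-- Binet formula for the Tribonacci polynomials. -/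
theorem tribonacci_poly_binet (x : ℝ) (α ω₁ ω₂ : ℂ)
    (hαω₁ : α ≠ ω₁) (hαω₂ : α ≠ ω₂) (hω₁ω₂ : ω₁ ≠ ω₂)
    (hsum : α + ω₁ + ω₂ = (x : ℂ) ^ 2)
    (hsum2 : α * ω₁ + α * ω₂ + ω₁ * ω₂ = -(x : ℂ))
    (hprod : α * ω₁ * ω₂ = 1) (n : ℕ) :
    (Trib x n : ℂ)
      = α ^ (n + 1) / ((α - ω₁) * (α - ω₂))
        - ω₁ ^ (n + 1) / ((α - ω₁) * (ω₁ - ω₂))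
        + ω₂ ^ (n + 1) / ((α - ω₂) * (ω₁ - ω₂)) := by
  have h1 : α - ω₁ ≠ 0 := sub_ne_zero.mpr hαω₁
  have h2 : α - ω₂ ≠ 0 := sub_ne_zero.mpr hαω₂
  have h3 : ω₁ - ω₂ ≠ 0 := sub_ne_zero.mpr hω₁ω₂
  have ea : α ^ 3 = (x : ℂ) ^ 2 * α ^ 2 + x * α + 1 := by
    linear_combination α ^ 2 * hsum - α * hsum2 + hprod
  have eb : ω₁ ^ 3 = (x : ℂ) ^ 2 * ω₁ ^ 2 + x * ω₁ + 1 := by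
    linear_combination ω₁ ^ 2 * hsum - ω₁ * hsum2 + hprod
  have ec : ω₂ ^ 3 = (x : ℂ) ^ 2 * ω₂ ^ 2 + x * ω₂ + 1 := by
    linear_combination ω₂ ^ 2 * hsum - ω₂ * hsum2 + hprod
  induction n using Nat.strong_induction_on with
  | _ n ih =>
    match n, ih with
    | 0, _ =>
      simp only [Trib, Complex.ofReal_zero]
      field_simp
      ring
    | 1, _ =>
      simp only [Trib, Complex.ofReal_one]
      field_simp
      ring
    | 2, _ =>
      simp only [Trib, Complex.ofReal_pow]
      rw [← hsum]
      field_simp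
      ring
    | m + 3, ih =>
      have i0 := ih m (by omega)
      have i1 := ih (m + 1) (by omega)
      have i2 := ih (m + 2) (by omega)
      simp only [Trib, Complex.ofReal_add, Complex.ofReal_mul, Complex.ofReal_pow]
      rw [i0, i1, i2]
      linear_combination (-(α ^ (m + 1) / ((α - ω₁) * (α - ω₂)))) * ea
        + (ω₁ ^ (m + 1) / ((α - ω₁) * (ω₁ - ω₂))) * eb
        - (ω₂ ^ (m + 1) / ((α - ω₂) * (ω₁ - ω₂))) * ec
end

section
/- Let x be a real number and let α, ω₁, ω₂ be complex numbers satisfying α+ω₁+ω₂ = x², αω₁+αω₂+ω₁ω₂ = -x, and αω₁ω₂ = 1 (i.e., the roots of λ³ - x²λ² - xλ - 1 = 0). Then for every natural number n, the Tribonacci-Lucas polynomial satisfies the Binet formula t_n(x) = αⁿ + ω₁ⁿ + ω₂ⁿ, where t_n(x) is regarded as a complex number. -/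
/-- Tribonacci-Lucas polynomials: t₀=3, t₁=x², t₂=x⁴+2x, tₙ₊₃ = x²tₙ₊₂ + xtₙ₊₁ + tₙ. -/
def TribL (x : ℝ) : ℕ → ℝ
  | 0 => 3
  | 1 => x ^ 2
  | 2 => x ^ 4 + 2 * x
  | n + 3 => x ^ 2 * TribL x (n + 2) + x * TribL x (n + 1) + TribL x n

/-- Tribonacci-Lucas quaternion polynomials Q_{t,n}(x). -/
noncomputable def Qt (x : ℝ) (n : ℕ) : Quaternion ℝ :=
  ⟨TribL x n, TribL x (n + 1), TribL x (n + 2), TribL x (n + 3)⟩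

/-- Binet formula for the Tribonacci-Lucas polynomials. -/
theorem tribonacci_lucas_poly_binet (x : ℝ) (α ω₁ ω₂ : ℂ)
    (hsum : α + ω₁ + ω₂ = (x : ℂ) ^ 2)
    (hsum2 : α * ω₁ + α * ω₂ + ω₁ * ω₂ = -(x : ℂ))
    (hprod : α * ω₁ * ω₂ = 1) (n : ℕ) :
    (TribL x n : ℂ) = α ^ n + ω₁ ^ n + ω₂ ^ n := by
  induction n using Nat.strong_induction_on with
  | _ n ih =>
    match n, ih with
    | 0, _ => simp [TribL]; norm_num
    | 1, _ => simp [TribL, hsum]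
    | 2, _ =>
      simp only [TribL]
      push_cast
      linear_combination (-(α + ω₁ + ω₂) - (x : ℂ) ^ 2) * hsum + 2 * hsum2
    | k + 3, ih =>
      have h0 := ih k (by omega)
      have h1 := ih (k + 1) (by omega)
      have h2 := ih (k + 2) (by omega)
      simp only [TribL]
      push_cast
      rw [h0, h1, h2]
      linear_combination (-(α ^ (k + 2) + ω₁ ^ (k + 2) + ω₂ ^ (k + 2))) * hsum
        + (α ^ (k + 1) + ω₁ ^ (k + 1) + ω₂ ^ (k + 1)) * hsum2
        - (α ^ k + ω₁ ^ k + ω₂ ^ k) * hprod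
end

section
/- Let x be a real number and let α, ω₁, ω₂ be complex numbers satisfying α+ω₁+ω₂ = x², αω₁+αω₂+ω₁ω₂ = -x, and αω₁ω₂ = 1. Set α̲ = 1 + α·i + α²·j + α³·k, ω̲₁ = 1 + ω₁·i + ω₁²·j + ω₁³·k, ω̲₂ = 1 + ω₂·i + ω₂²·j + ω₂³·k in the quaternion algebra over ℂ. Then for every natural number n, the Tribonacci-Lucas quaternion polynomial (regarded in the quaternion algebra over ℂ) satisfies Q_{t,n}(x) = αⁿ·α̲ + ω₁ⁿ·ω̲₁ + ω₂ⁿ·ω̲₂. -/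
/-- Tribonacci-Lucas quaternion polynomials regarded in the quaternion algebra over ℂ. -/
noncomputable def QtC (x : ℝ) (n : ℕ) : Quaternion ℂ :=
  ⟨(TribL x n : ℂ), (TribL x (n + 1) : ℂ), (TribL x (n + 2) : ℂ), (TribL x (n + 3) : ℂ)⟩

/-- The quaternion 1 + a·i + a²·j + a³·k over ℂ. -/
def uq (a : ℂ) : Quaternion ℂ := ⟨1, a, a ^ 2, a ^ 3⟩

theorem TribL_binet (x : ℝ) (α ω₁ ω₂ : ℂ)
    (hsum : α + ω₁ + ω₂ = (x : ℂ) ^ 2)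
    (hsum2 : α * ω₁ + α * ω₂ + ω₁ * ω₂ = -(x : ℂ))
    (hprod : α * ω₁ * ω₂ = 1) : ∀ n : ℕ,
    (TribL x n : ℂ) = α ^ n + ω₁ ^ n + ω₂ ^ n
  | 0 => by simp [TribL]; norm_num
  | 1 => by simp [TribL, hsum]
  | 2 => by
    simp only [TribL]
    push_cast
    linear_combination (-(x : ℂ) ^ 2 - (α + ω₁ + ω₂)) * hsum + 2 * hsum2
  | n + 3 => by
    have h0 := TribL_binet x α ω₁ ω₂ hsum hsum2 hprod n
    have h1 := TribL_binet x α ω₁ ω₂ hsum hsum2 hprod (n + 1)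
    have h2 := TribL_binet x α ω₁ ω₂ hsum hsum2 hprod (n + 2)
    have hx : (x : ℂ) = -(α * ω₁ + α * ω₂ + ω₁ * ω₂) := by rw [hsum2, neg_neg]
    simp only [TribL]
    push_cast
    rw [h0, h1, h2, ← hsum, hx]
    linear_combination (-(α ^ n + ω₁ ^ n + ω₂ ^ n)) * hprod

/-- Binet formula for the Tribonacci-Lucas quaternion polynomials. -/
theorem tribonacci_lucas_quaternion_binet (x : ℝ) (α ω₁ ω₂ : ℂ)
    (hsum : α + ω₁ + ω₂ = (x : ℂ) ^ 2)
    (hsum2 : α * ω₁ + α * ω₂ + ω₁ * ω₂ = -(x : ℂ))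
    (hprod : α * ω₁ * ω₂ = 1) (n : ℕ) :
    QtC x n = (α ^ n) • uq α + (ω₁ ^ n) • uq ω₁ + (ω₂ ^ n) • uq ω₂ := by
  have H := TribL_binet x α ω₁ ω₂ hsum hsum2 hprod
  ext <;> simp [QtC, H, pow_add] <;> simp [uq]
end

section
/- Let x be a real number and let α, ω₁, ω₂ be pairwise distinct complex numbers satisfying α+ω₁+ω₂ = x², αω₁+αω₂+ω₁ω₂ = -x, and αω₁ω₂ = 1, and set α̲ = 1 + α·i + α²·j + α³·k, ω̲₁ = 1 + ω₁·i + ω₁²·j + ω₁³·k, ω̲₂ = 1 + ω₂·i + ω₂²·j + ω₂³·k in the quaternion algebra over ℂ. Then for every complex number y, the series ∑_{n≥0} (yⁿ/n!)·Q_{T,n}(x) converges (has sum) to (α·e^{αy}/((α-ω₁)(α-ω₂)))·α̲ - (ω₁·e^{ω₁y}/((α-ω₁)(ω₁-ω₂)))·ω̲₁ + (ω₂·e^{ω₂y}/((α-ω₂)(ω₁-ω₂)))·ω̲₂. -/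
/-- Tribonacci quaternion polynomials regarded in the quaternion algebra over ℂ. -/
noncomputable def QTC (x : ℝ) (n : ℕ) : Quaternion ℂ :=
  ⟨(Trib x n : ℂ), (Trib x (n + 1) : ℂ), (Trib x (n + 2) : ℂ), (Trib x (n + 3) : ℂ)⟩

/-- The natural (componentwise) topology on the quaternion algebra over ℂ. -/
noncomputable instance : TopologicalSpace (Quaternion ℂ) :=
  TopologicalSpace.induced (fun q => (q.re, q.imI, q.imJ, q.imK)) inferInstance

theorem binet_aux (x : ℝ) (α ω₁ ω₂ : ℂ)
    (hαω₁ : α ≠ ω₁) (hαω₂ : α ≠ ω₂) (hω₁ω₂ : ω₁ ≠ ω₂)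
    (hsum : α + ω₁ + ω₂ = (x : ℂ) ^ 2)
    (hsum2 : α * ω₁ + α * ω₂ + ω₁ * ω₂ = -(x : ℂ))
    (hprod : α * ω₁ * ω₂ = 1) (n : ℕ) :
    (Trib x n : ℂ) = α / ((α - ω₁) * (α - ω₂)) * α ^ n
      - ω₁ / ((α - ω₁) * (ω₁ - ω₂)) * ω₁ ^ n + ω₂ / ((α - ω₂) * (ω₁ - ω₂)) * ω₂ ^ n := by
  have h1 := sub_ne_zero.2 hαω₁
  have h2 := sub_ne_zero.2 hαω₂
  have h3 := sub_ne_zero.2 hω₁ω₂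
  induction n using Nat.strong_induction_on with
  | _ n ih =>
    match n, ih with
    | 0, _ => simp only [Trib]; push_cast; field_simp; ring
    | 1, _ => simp only [Trib]; push_cast; field_simp; ring
    | 2, _ => simp only [Trib]; push_cast; rw [← hsum]; field_simp; ring
    | n + 3, ih =>
      have e : ∀ t : ℂ, (t - α) * (t - ω₁) * (t - ω₂) = 0 →
          t ^ (n + 3) = (x : ℂ) ^ 2 * t ^ (n + 2) + x * t ^ (n + 1) + t ^ n := by
        intro t ht
        linear_combination t ^ n * ht + t ^ (n + 2) * hsum - t ^ (n + 1) * hsum2 + t ^ n * hprod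
      simp only [Trib]
      push_cast
      rw [ih (n + 2) (by omega), ih (n + 1) (by omega), ih n (by omega),
        e α (by ring), e ω₁ (by ring), e ω₂ (by ring)]
      ring

theorem comp_aux (x : ℝ) (α ω₁ ω₂ : ℂ)
    (hαω₁ : α ≠ ω₁) (hαω₂ : α ≠ ω₂) (hω₁ω₂ : ω₁ ≠ ω₂)
    (hsum : α + ω₁ + ω₂ = (x : ℂ) ^ 2)
    (hsum2 : α * ω₁ + α * ω₂ + ω₁ * ω₂ = -(x : ℂ))
    (hprod : α * ω₁ * ω₂ = 1) (y : ℂ) (m : ℕ) :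
    HasSum (fun n : ℕ => (y ^ n / n.factorial) * (Trib x (n + m) : ℂ))
      ((α * Complex.exp (α * y) / ((α - ω₁) * (α - ω₂))) * α ^ m
        - (ω₁ * Complex.exp (ω₁ * y) / ((α - ω₁) * (ω₁ - ω₂))) * ω₁ ^ m
        + (ω₂ * Complex.exp (ω₂ * y) / ((α - ω₂) * (ω₁ - ω₂))) * ω₂ ^ m) := by
  have E : ∀ t : ℂ, HasSum (fun n : ℕ => (t * y) ^ n / n.factorial) (Complex.exp (t * y)) := by
    intro t
    rw [Complex.exp_eq_exp_ℂ]
    exact NormedSpace.expSeries_div_hasSum_exp (t * y)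
  have H := (((E α).mul_left (α / ((α - ω₁) * (α - ω₂)) * α ^ m)).sub
    ((E ω₁).mul_left (ω₁ / ((α - ω₁) * (ω₁ - ω₂)) * ω₁ ^ m))).add
    ((E ω₂).mul_left (ω₂ / ((α - ω₂) * (ω₁ - ω₂)) * ω₂ ^ m))
  convert H using 1
  · rfl
  · funext n
    rw [binet_aux x α ω₁ ω₂ hαω₁ hαω₂ hω₁ω₂ hsum hsum2 hprod]
    simp only [mul_pow, pow_add]
    ring
  · ring

/-- Components as an additive map. -/
def compHom : Quaternion ℂ →+ ℂ × ℂ × ℂ × ℂ where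
  toFun q := (q.re, q.imI, q.imJ, q.imK)
  map_zero' := rfl
  map_add' _ _ := rfl

/-- exponential generating function of the Tribonacci quaternion polynomials. -/
theorem tribonacci_quaternion_exp_generating_function (x : ℝ) (α ω₁ ω₂ : ℂ)
    (hαω₁ : α ≠ ω₁) (hαω₂ : α ≠ ω₂) (hω₁ω₂ : ω₁ ≠ ω₂)
    (hsum : α + ω₁ + ω₂ = (x : ℂ) ^ 2)
    (hsum2 : α * ω₁ + α * ω₂ + ω₁ * ω₂ = -(x : ℂ))
    (hprod : α * ω₁ * ω₂ = 1) (y : ℂ) :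
    HasSum (fun n : ℕ => (y ^ n / n.factorial) • QTC x n)
      ((α * Complex.exp (α * y) / ((α - ω₁) * (α - ω₂))) • uq α
        - (ω₁ * Complex.exp (ω₁ * y) / ((α - ω₁) * (ω₁ - ω₂))) • uq ω₁
        + (ω₂ * Complex.exp (ω₂ * y) / ((α - ω₂) * (ω₁ - ω₂))) • uq ω₂) := by
  have C := comp_aux x α ω₁ ω₂ hαω₁ hαω₂ hω₁ω₂ hsum hsum2 hprod y
  have hi : Topology.IsInducing compHom := ⟨rfl⟩
  rw [← hi.hasSum_iff]
  have H := (C 0).prodMk ((C 1).prodMk ((C 2).prodMk (C 3)))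
  convert H using 1
  · funext n
    rfl
  · simp only [pow_zero, pow_one]
    rfl
end

section
/- For every real number x and every natural number n, the Tribonacci quaternion polynomials satisfy the binomial identity ∑_{r=0}^{n} ∑_{s=0}^{r} C(n,r)·C(r,s)·x^{r+s}·Q_{T,r+s}(x) = Q_{T,3n}(x), where C(·,·) denotes the binomial coefficient. -/
lemma QT_rec (x : ℝ) (n : ℕ) :
    QT x (n + 3) = QT x n + x • QT x (n + 1) + (x ^ 2) • QT x (n + 2) := by
  ext <;> simp only [Quaternion.re_add, Quaternion.imI_add, Quaternion.imJ_add, Quaternion.imK_add,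
    Quaternion.re_smul, Quaternion.imI_smul, Quaternion.imJ_smul, Quaternion.imK_smul,
    smul_eq_mul] <;> simp only [QT, Trib] <;> ring

noncomputable def QTL (x : ℝ) : Polynomial ℝ →ₗ[ℝ] Quaternion ℝ :=
  Polynomial.lsum (fun k => LinearMap.toSpanSingleton ℝ (Quaternion ℝ) (QT x k))

lemma QTL_X (x : ℝ) (k : ℕ) : QTL x (Polynomial.X ^ k) = QT x k := by
  simp [QTL, Polynomial.lsum_apply, ← Polynomial.monomial_one_right_eq_X_pow,
    Polynomial.sum_monomial_index]

lemma QTL_pow (x : ℝ) (n : ℕ) : ∀ m : ℕ,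
    QTL x ((x • Polynomial.X * (x • Polynomial.X + 1) + 1) ^ n * Polynomial.X ^ m)
      = QT x (3 * n + m) := by
  induction n with
  | zero => intro m; simp [QTL_X]
  | succ n ih =>
    intro m
    have h : ((x • Polynomial.X * (x • Polynomial.X + 1) + 1) ^ (n + 1) * Polynomial.X ^ m
        : Polynomial ℝ) =
        (x • Polynomial.X * (x • Polynomial.X + 1) + 1) ^ n * Polynomial.X ^ m
        + x • ((x • Polynomial.X * (x • Polynomial.X + 1) + 1) ^ n * Polynomial.X ^ (m + 1))
        + x ^ 2 • ((x • Polynomial.X * (x • Polynomial.X + 1) + 1) ^ n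
          * Polynomial.X ^ (m + 2)) := by
      simp only [Polynomial.smul_eq_C_mul, Polynomial.C_pow]
      ring
    rw [h, map_add, map_add, map_smul, map_smul, ih, ih, ih,
      show 3 * (n + 1) + m = (3 * n + m) + 3 by ring, QT_rec]
    rfl

/-- ∑_{r=0}^{n} ∑_{s=0}^{r} C(n,r)·C(r,s)·x^{r+s}·Q_{T,r+s}(x) = Q_{T,3n}(x). -/
theorem tribonacci_quaternion_binomial_sum (x : ℝ) (n : ℕ) :
    ∑ r ∈ Finset.range (n + 1), ∑ s ∈ Finset.range (r + 1),
      ((n.choose r : ℝ) * (r.choose s : ℝ) * x ^ (r + s)) • QT x (r + s)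
      = QT x (3 * n) := by
  have h := QTL_pow x n 0
  rw [pow_zero, mul_one, add_zero] at h
  rw [← h, add_pow, map_sum]
  refine Finset.sum_congr rfl fun r _ => ?_
  rw [mul_pow, add_pow, Finset.mul_sum, Finset.sum_mul, Finset.sum_mul, map_sum]
  refine Finset.sum_congr rfl fun s _ => ?_
  rw [← QTL_X, ← map_smul]
  congr 1
  simp only [Polynomial.smul_eq_C_mul, Polynomial.C_pow, Polynomial.C_mul, one_pow,
    Polynomial.C_eq_natCast, map_natCast]
  ring
end

section
/- For every real number x and every natural number n, the Tribonacci-Lucas quaternion polynomials satisfy the binomial identity ∑_{r=0}^{n} ∑_{s=0}^{r} C(n,r)·C(r,s)·x^{r+s}·Q_{t,r+s}(x) = Q_{t,3n}(x), where C(·,·) denotes the binomial coefficient. -/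
open Polynomial in
/-- The linear functional sending `X ^ n` to `Qt x n`. -/
noncomputable def QtL (x : ℝ) : ℝ[X] →ₗ[ℝ] Quaternion ℝ :=
  Polynomial.lsum (fun n => LinearMap.toSpanSingleton ℝ (Quaternion ℝ) (Qt x n))

open Polynomial in
theorem QtL_monomial (x : ℝ) (n : ℕ) (a : ℝ) : QtL x (monomial n a) = a • Qt x n := by
  simp [QtL, Polynomial.lsum_apply, Polynomial.sum_monomial_index]

theorem Qt_rec (x : ℝ) (n : ℕ) :
    Qt x (n + 3) = x ^ 2 • Qt x (n + 2) + x • Qt x (n + 1) + Qt x n := by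
  ext
  · rw [Quaternion.re_add, Quaternion.re_add, Quaternion.re_smul, Quaternion.re_smul]
    exact TribL.eq_4 x n
  · rw [Quaternion.imI_add, Quaternion.imI_add, Quaternion.imI_smul, Quaternion.imI_smul]
    exact TribL.eq_4 x (n + 1)
  · rw [Quaternion.imJ_add, Quaternion.imJ_add, Quaternion.imJ_smul, Quaternion.imJ_smul]
    exact TribL.eq_4 x (n + 2)
  · rw [Quaternion.imK_add, Quaternion.imK_add, Quaternion.imK_smul, Quaternion.imK_smul]
    exact TribL.eq_4 x (n + 3)

open Polynomial in
theorem QtL_step (x : ℝ) (p : ℝ[X]) :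
    QtL x (p * X ^ 3) = QtL x (p * (C x * X * (C x * X + 1) + 1)) := by
  induction p using Polynomial.induction_on' with
  | add p q hp hq => rw [add_mul, add_mul, map_add, map_add, hp, hq]
  | monomial n a =>
    have h1 : (monomial n a : ℝ[X]) * X ^ 3 = monomial (n + 3) a := by
      simp only [← C_mul_X_pow_eq_monomial]; ring
    have h2 : (monomial n a : ℝ[X]) * (C x * X * (C x * X + 1) + 1)
        = monomial (n + 2) (a * x ^ 2) + monomial (n + 1) (a * x) + monomial n a := by
      simp only [← C_mul_X_pow_eq_monomial, C_mul, C_pow]; ring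
    rw [h1, h2, map_add, map_add]
    simp only [QtL_monomial, Qt_rec, smul_add, smul_smul]

open Polynomial in
theorem QtL_pow (x : ℝ) (n : ℕ) : ∀ p : ℝ[X],
    QtL x (p * X ^ (3 * n)) = QtL x (p * (C x * X * (C x * X + 1) + 1) ^ n) := by
  induction n with
  | zero => simp
  | succ n ih =>
    intro p
    have h1 : p * X ^ (3 * (n + 1)) = (p * X ^ 3) * X ^ (3 * n) := by ring
    rw [h1, ih, mul_right_comm, QtL_step, pow_succ, mul_assoc]

/-- ∑_{r=0}^{n} ∑_{s=0}^{r} C(n,r)·C(r,s)·x^{r+s}·Q_{t,r+s}(x) = Q_{t,3n}(x). -/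
theorem tribonacci_lucas_quaternion_binomial_sum (x : ℝ) (n : ℕ) :
    ∑ r ∈ Finset.range (n + 1), ∑ s ∈ Finset.range (r + 1),
      ((n.choose r : ℝ) * (r.choose s : ℝ) * x ^ (r + s)) • Qt x (r + s)
      = Qt x (3 * n) := by
  have h := QtL_pow x n 1
  rw [one_mul, one_mul, ← Polynomial.monomial_one_right_eq_X_pow, QtL_monomial, one_smul] at h
  rw [h, add_pow, map_sum]
  refine Finset.sum_congr rfl fun r _ => ?_
  rw [mul_pow, add_pow, Finset.mul_sum, Finset.sum_mul, Finset.sum_mul, map_sum]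
  refine Finset.sum_congr rfl fun s _ => ?_
  rw [← QtL_monomial]
  congr 1
  simp only [← Polynomial.C_mul_X_pow_eq_monomial, Polynomial.C_mul, Polynomial.C_pow, map_natCast]
  ring
end

section
/- For every real number x with x ≠ 0 and x ≠ -1, and every natural number n, the partial sums of the Tribonacci quaternion polynomials satisfy (x² + x)·∑_{l=0}^{n} Q_{T,l}(x) = Q_{T,n+2}(x) + (1 - x²)·Q_{T,n+1}(x) + Q_{T,n}(x) - ω(x), where ω(x) = 1 + i + (x² + x + 1)·j + (x⁴ + x³ + x² + x + 1)·k. -/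
/-- `ω(x) = 1 + i + (x²+x+1)j + (x⁴+x³+x²+x+1)k`. -/
def omegaQ (x : ℝ) : Quaternion ℝ := ⟨1, 1, x ^ 2 + x + 1, x ^ 4 + x ^ 3 + x ^ 2 + x + 1⟩

/-- summation formula for the Tribonacci quaternion polynomials:
`(x²+x)·∑_{l=0}^{n} Q_{T,l}(x) = Q_{T,n+2}(x) + (1-x²)·Q_{T,n+1}(x) + Q_{T,n}(x) - ω(x)`. -/
theorem tribonacci_quaternion_sum (x : ℝ) (hx0 : x ≠ 0) (hx1 : x ≠ -1) (n : ℕ) :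
    (x ^ 2 + x) • ∑ l ∈ Finset.range (n + 1), QT x l
      = QT x (n + 2) + (1 - x ^ 2) • QT x (n + 1) + QT x n - omegaQ x := by
  have hrec : ∀ m, Trib x (m + 3) = x ^ 2 * Trib x (m + 2) + x * Trib x (m + 1) + Trib x m :=
    fun m => by rw [Trib]
  have h0 : Trib x 0 = 0 := by rw [Trib]
  have h1 : Trib x 1 = 1 := by rw [Trib]
  have h2 : Trib x 2 = x ^ 2 := by rw [Trib]
  have q1 : ∀ m, (QT x m).re = Trib x m := fun _ => rfl
  have q2 : ∀ m, (QT x m).imI = Trib x (m + 1) := fun _ => rfl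
  have q3 : ∀ m, (QT x m).imJ = Trib x (m + 2) := fun _ => rfl
  have q4 : ∀ m, (QT x m).imK = Trib x (m + 3) := fun _ => rfl
  have o1 : (omegaQ x).re = 1 := rfl
  have o2 : (omegaQ x).imI = 1 := rfl
  have o3 : (omegaQ x).imJ = x ^ 2 + x + 1 := rfl
  have o4 : (omegaQ x).imK = x ^ 4 + x ^ 3 + x ^ 2 + x + 1 := rfl
  have hstep : ∀ m, QT x (m + 3) = x ^ 2 • QT x (m + 2) + x • QT x (m + 1) + QT x m := by
    intro m
    ext
    · simpa [q1, q2, q3, q4] using hrec m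
    · simpa [q1, q2, q3, q4] using hrec (m + 1)
    · simpa [q1, q2, q3, q4] using hrec (m + 2)
    · simpa [q1, q2, q3, q4] using hrec (m + 3)
  induction n with
  | zero =>
    simp only [Nat.zero_add]
    have h3 := hrec 0
    have h4 := hrec 1
    have h5 := hrec 2
    norm_num [h0, h1, h2] at h3 h4 h5
    rw [h3] at h4 h5
    rw [h4] at h5
    rw [Finset.sum_range_one]
    ext <;> simp [q1, q2, q3, q4, o1, o2, o3, o4, h0, h1, h2, h3, h4, h5] <;> ring
  | succ k ih =>
    rw [Finset.sum_range_succ, smul_add, ih, hstep k]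
    module
end

section
/- For every real number x and every natural number n, the Tribonacci quaternion polynomials satisfy Q_{T,n+3}(x) = T_{n+2}(x)·Q_{T,2}(x) + T_{n+1}(x)·(x·Q_{T,1}(x) + Q_{T,0}(x)) + T_n(x)·Q_{T,1}(x). -/
/-- `Q_{T,n+3}(x) = T_{n+2}(x)·Q_{T,2}(x) + T_{n+1}(x)·(x·Q_{T,1}(x)+Q_{T,0}(x)) + T_n(x)·Q_{T,1}(x)`. -/
theorem tribonacci_quaternion_via_matrix (x : ℝ) (n : ℕ) :
    QT x (n + 3)
      = Trib x (n + 2) • QT x 2 + Trib x (n + 1) • (x • QT x 1 + QT x 0)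
        + Trib x n • QT x 1 := by
  have h : ∀ m, Trib x (m + 3) = x ^ 2 * Trib x (m + 2) + x * Trib x (m + 1) + Trib x m :=
    fun m => by rw [Trib]
  have t0 : Trib x 0 = 0 := by rw [Trib]
  have t1 : Trib x 1 = 1 := by rw [Trib]
  have t2 : Trib x 2 = x ^ 2 := by rw [Trib]
  have t3 := h 0
  have t4 := h 1
  have t5 := h 2
  have h0 := h n
  have h1 := h (n + 1)
  have h2 := h (n + 2)
  have h3 := h (n + 3)
  simp only [add_assoc, Nat.reduceAdd, zero_add] at t3 t4 t5 h0 h1 h2 h3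
  have q0 : ∀ m, (QT x m).re = Trib x m := fun m => rfl
  have q1 : ∀ m, (QT x m).imI = Trib x (m + 1) := fun m => rfl
  have q2 : ∀ m, (QT x m).imJ = Trib x (m + 2) := fun m => rfl
  have q3 : ∀ m, (QT x m).imK = Trib x (m + 3) := fun m => rfl
  ext <;> simp only [Quaternion.re_add, Quaternion.imI_add, Quaternion.imJ_add,
    Quaternion.imK_add, Quaternion.re_smul, Quaternion.imI_smul, Quaternion.imJ_smul,
    Quaternion.imK_smul, smul_eq_mul, q0, q1, q2, q3, add_assoc, Nat.reduceAdd, zero_add,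
    h3, h2, h1, h0, t5, t4, t3, t2, t1, t0] <;> ring
end
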